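/- Let M > 0 and 0 < α < 4π. Then there exists a constant K = K(α, M) > 0 such that for every continuously differentiable function u : ℝ² → ℝ with compact support satisfying ∫_{ℝ²} |∇u(x)|² dx ≤ 1 and ∫_{ℝ²} u(x)² dx ≤ M, one has ∫_{ℝ²} (e^{α u(x)²} − 1) dx ≤ K. -/

import Mathlib

open MeasureTheory

/-!
In polar coordinates around a point `x` the Jacobian cancels the kernel of the Riesz potential: a
point value `u x` is at most the mean of `u` over the shell `1 < ‖y - x‖ ≤ 2` plus the potential
`∫ ‖fderiv ℝ u y‖ ‖y - x‖ ^ (1 - dim E) dy` over the ball of radius `2`, divided by the area `S` of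
the unit sphere. The mean is bounded in terms of the norm of `u`. By Hölder, the potential over
`s < ‖y - x‖ ≤ 2` is bounded by a power of `log (2 / s)`, while the potential over `‖y - x‖ ≤ s`
has norm at most `S * s`, so by Chebyshev it exceeds `S` only on a set of measure `s ^ dim E`. In
the plane, letting `s` decrease with the level `t` gives `μ {t < ‖u‖} ≤ 4 exp (-4κ (t - T) ^ 2)`,
with `κ` the area of the unit disc and `T` depending only on the bound for `u`. The layer cake
formula then turns this Gaussian tail into the exponential integral bound for every `α < 4κ`.
-/

open Set Metric Module
open scoped ENNReal NNReal

section Holder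

variable {X : Type*} [MeasurableSpace X] {ν : Measure X} {f w : X → ℝ≥0∞}

lemma lintegral_pow_succ_le_lintegral_inv_pow_mul (hf : AEMeasurable f ν) (hw : AEMeasurable w ν)
    (hw_zero : ∀ᵐ x ∂ν, w x ≠ 0) (hw_top : ∀ᵐ x ∂ν, w x ≠ ∞) (n : ℕ) :
    (∫⁻ x, f x ∂ν) ^ (n + 1) ≤
      (∫⁻ x, (w x)⁻¹ ∂ν) ^ n * ∫⁻ x, w x ^ n * f x ^ (n + 1) ∂ν := by
  set p : ℝ := n / (n + 1)
  set q : ℝ := 1 / (n + 1)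
  have hq : q * (n + 1 : ℕ) = 1 := by simp only [q]; push_cast; field_simp
  have hp : n * q = p := by simp only [p, q]; ring
  have hpow (A B : ℝ≥0∞) : (A ^ p * B ^ q) ^ (n + 1) = A ^ n * B := by
    rw [mul_pow, ← ENNReal.rpow_mul_natCast, ← ENNReal.rpow_mul_natCast, hq, ← hp, mul_assoc, hq,
      mul_one, ENNReal.rpow_natCast, ENNReal.rpow_one]
  have hfactor : f =ᵐ[ν] fun x ↦ (w x)⁻¹ ^ p * (w x ^ n * f x ^ (n + 1)) ^ q := by
    filter_upwards [hw_zero, hw_top] with x h0 htop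
    refine (ENNReal.pow_right_strictMono n.succ_ne_zero).injective ?_
    simp only [hpow, ← mul_assoc, ← mul_pow, ENNReal.inv_mul_cancel h0 htop, one_pow, one_mul]
  calc (∫⁻ x, f x ∂ν) ^ (n + 1)
      = (∫⁻ x, (w x)⁻¹ ^ p * (w x ^ n * f x ^ (n + 1)) ^ q ∂ν) ^ (n + 1) := by
        rw [lintegral_congr_ae hfactor]
    _ ≤ ((∫⁻ x, (w x)⁻¹ ∂ν) ^ p * (∫⁻ x, w x ^ n * f x ^ (n + 1) ∂ν) ^ q) ^ (n + 1) := by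
        gcongr
        exact ENNReal.lintegral_mul_norm_pow_le hw.inv ((hw.pow_const n).mul (hf.pow_const _))
          (by positivity) (by positivity) (by simp only [p, q]; field_simp)
    _ = _ := hpow _ _

end Holder

section Ray

variable {E G : Type*} [NormedAddCommGroup E] [NormedSpace ℝ E]
  [NormedAddCommGroup G] [NormedSpace ℝ G]

lemma enorm_sub_le_lintegral_enorm_fderiv {u : E → G} (hu : ContDiff ℝ 1 u) (x v : E) {ρ : ℝ}
    (hρ : 0 ≤ ρ) :
    ‖u (x + ρ • v) - u x‖ₑ ≤ ∫⁻ r in Ioc 0 ρ, ‖fderiv ℝ u (x + r • v)‖ₑ * ‖v‖ₑ := by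
  have hray : ContDiff ℝ 1 fun r : ℝ ↦ u (x + r • v) := by fun_prop
  have hderiv (r : ℝ) : deriv (fun r : ℝ ↦ u (x + r • v)) r = fderiv ℝ u (x + r • v) v := by
    have hline : HasDerivAt (fun r : ℝ ↦ x + r • v) v r := by
      simpa using ((hasDerivAt_id r).smul_const v).const_add x
    exact ((hu.differentiable one_ne_zero _).hasFDerivAt.comp_hasDerivAt r hline).deriv
  calc ‖u (x + ρ • v) - u x‖ₑ
      ≤ ∫⁻ r in Ioc 0 ρ, ‖deriv (fun r : ℝ ↦ u (x + r • v)) r‖ₑ := by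
        simpa [restrict_Ioc_eq_restrict_Icc] using
          enorm_sub_le_lintegral_deriv_of_contDiffOn_Icc hray.contDiffOn hρ
    _ ≤ ∫⁻ r in Ioc 0 ρ, ‖fderiv ℝ u (x + r • v)‖ₑ * ‖v‖ₑ := by
        gcongr with r
        rw [hderiv]
        exact (fderiv ℝ u (x + r • v)).le_opENorm v

end Ray

section Polar

variable {E : Type*} [NormedAddCommGroup E] [NormedSpace ℝ E] [MeasurableSpace E]

/-- The measure `dω ⊗ dr` on the polar coordinates `(ω, r)` of the shell `a < ‖y‖ ≤ b`, without
the Jacobian `r ^ (finrank ℝ E - 1)`. -/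
noncomputable abbrev shellMeasure (μ : Measure E) (a b : ℝ) : Measure (sphere (0 : E) 1 × ℝ) :=
  μ.toSphere.prod (volume.restrict (Ioc a b))

variable {μ : Measure E} {a b : ℝ}

lemma ae_shellMeasure_mem_Ioc : ∀ᵐ p ∂shellMeasure μ a b, p.2 ∈ Ioc a b :=
  Measure.quasiMeasurePreserving_snd.ae (ae_restrict_mem measurableSet_Ioc)

lemma shellMeasure_univ :
    shellMeasure μ a b univ = μ.toSphere univ * ENNReal.ofReal (b - a) := by
  rw [← univ_prod_univ, Measure.prod_prod, Measure.restrict_apply_univ, Real.volume_Ioc]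

lemma lintegral_shellMeasure_inv (ha : 0 < a) (hab : a ≤ b) :
    ∫⁻ p, (ENNReal.ofReal p.2)⁻¹ ∂shellMeasure μ a b =
      μ.toSphere univ * ENNReal.ofReal (Real.log (b / a)) := by
  have hpos : ∀ᵐ r ∂volume.restrict (Ioc a b), 0 < r := by
    filter_upwards [ae_restrict_mem measurableSet_Ioc] with r hr using ha.trans hr.1
  have hint : IntegrableOn (fun r : ℝ ↦ r⁻¹) (Ioc a b) :=
    (intervalIntegrable_inv_iff.2 <| .inr <| by simp [uIcc_of_le hab, ha]).1
  calc ∫⁻ p, (ENNReal.ofReal p.2)⁻¹ ∂shellMeasure μ a b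
      = ∫⁻ _, (∫⁻ r in Ioc a b, (ENNReal.ofReal r)⁻¹) ∂μ.toSphere :=
        lintegral_prod _ (by fun_prop)
    _ = μ.toSphere univ * ∫⁻ r in Ioc a b, (ENNReal.ofReal r)⁻¹ := by
        rw [lintegral_const, mul_comm]
    _ = μ.toSphere univ * ∫⁻ r in Ioc a b, ENNReal.ofReal r⁻¹ := by
        congr 1
        refine lintegral_congr_ae ?_
        filter_upwards [hpos] with r hr using (ENNReal.ofReal_inv_of_pos hr).symm
    _ = μ.toSphere univ * ENNReal.ofReal (Real.log (b / a)) := by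
        rw [← ofReal_integral_eq_lintegral_ofReal hint (hpos.mono fun r hr ↦ inv_nonneg.2 hr.le),
          ← intervalIntegral.integral_of_le hab, integral_inv_of_pos ha (ha.trans_le hab)]

variable [BorelSpace E] [FiniteDimensional ℝ E]

lemma lintegral_eq_lintegral_toSphere [Nontrivial E] (μ : Measure E) [μ.IsAddHaarMeasure]
    {F : E → ℝ≥0∞} (hF : Measurable F) :
    ∫⁻ y, F y ∂μ =
      ∫⁻ ω, (∫⁻ r in Ioi (0 : ℝ), .ofReal (r ^ (finrank ℝ E - 1)) * F (r • (ω : E)))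
        ∂μ.toSphere := by
  have hmeas : Measurable fun p : sphere (0 : E) 1 × Ioi (0 : ℝ) ↦ F ((p.2 : ℝ) • (p.1 : E)) :=
    hF.comp (by fun_prop)
  calc ∫⁻ y, F y ∂μ = ∫⁻ y : ({0}ᶜ : Set E), F y ∂(μ.comap (↑)) := by
        rw [lintegral_subtype_comap (measurableSet_singleton _).compl, restrict_compl_singleton]
    _ = ∫⁻ p, F ((p.2 : ℝ) • (p.1 : E)) ∂μ.toSphere.prod (.volumeIoiPow (finrank ℝ E - 1)) := by
        rw [← μ.measurePreserving_homeomorphUnitSphereProd.lintegral_comp hmeas]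
        refine lintegral_congr fun y ↦ ?_
        have hy : ‖(y : E)‖ ≠ 0 := norm_ne_zero_iff.2 y.2
        simp [smul_smul, hy]
    _ = _ := by
        rw [lintegral_prod _ hmeas.aemeasurable]
        refine lintegral_congr fun ω ↦ ?_
        have hray : Measurable fun r : Ioi (0 : ℝ) ↦ F ((r : ℝ) • (ω : E)) := by fun_prop
        rw [Measure.volumeIoiPow, lintegral_withDensity_eq_lintegral_mul _ (by fun_prop) hray,
          ← lintegral_subtype_comap measurableSet_Ioi]
        rfl

variable [μ.IsAddHaarMeasure] {F : E → ℝ≥0∞}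

lemma lintegral_shellMeasure_pow_mul_le {n : ℕ} (hn : finrank ℝ E = n + 1)
    (hF : Measurable F) (ha : 0 ≤ a) (x : E) :
    ∫⁻ p, ENNReal.ofReal p.2 ^ n * F (x + p.2 • (p.1 : E)) ∂shellMeasure μ a b ≤
      ∫⁻ y, F y ∂μ := by
  have : Nontrivial E := nontrivial_of_finrank_eq_succ hn
  rw [← lintegral_add_left_eq_self F x,
    lintegral_eq_lintegral_toSphere μ (F := fun y ↦ F (x + y)) (by fun_prop), hn,
    lintegral_prod _ (by fun_prop)]
  refine lintegral_mono fun ω ↦ ?_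
  calc ∫⁻ r in Ioc a b, ENNReal.ofReal r ^ n * F (x + r • (ω : E))
      ≤ ∫⁻ r in Ioi 0, ENNReal.ofReal r ^ n * F (x + r • (ω : E)) :=
        lintegral_mono_set fun r hr ↦ ha.trans_lt hr.1
    _ = ∫⁻ r in Ioi 0, ENNReal.ofReal (r ^ n) * F (x + r • (ω : E)) :=
        setLIntegral_congr_fun measurableSet_Ioi fun r hr ↦ by
          rw [ENNReal.ofReal_pow (le_of_lt hr)]

variable (μ) in
/-- The integral of `F` over the shell `a < ‖y - x‖ ≤ b` against the kernel
`‖y - x‖ ^ (1 - finrank ℝ E)`, written in polar coordinates around `x`, where the kernel cancels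
the Jacobian. -/
noncomputable def shellIntegral (F : E → ℝ≥0∞) (a b : ℝ) (x : E) : ℝ≥0∞ :=
  ∫⁻ p, F (x + p.2 • (p.1 : E)) ∂shellMeasure μ a b

lemma shellIntegral_le_add (c : ℝ) (x : E) :
    shellIntegral μ F a b x ≤ shellIntegral μ F a c x + shellIntegral μ F c b x := by
  have hrestrict : (volume.restrict (Ioc a b) : Measure ℝ) ≤
      volume.restrict (Ioc a c) + volume.restrict (Ioc c b) :=
    (Measure.restrict_mono Ioc_subset_Ioc_union_Ioc le_rfl).trans (Measure.restrict_union_le _ _)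
  rw [shellIntegral, shellIntegral, shellIntegral, ← lintegral_add_measure, ← Measure.prod_add]
  exact lintegral_mono' (Measure.prod_mono le_rfl hrestrict) le_rfl

lemma shellIntegral_pow_finrank_le {n : ℕ} (hn : finrank ℝ E = n + 1) (hF : Measurable F)
    (ha : 0 < a) (hab : a ≤ b) (x : E) :
    shellIntegral μ F a b x ^ (n + 1) ≤
      (μ.toSphere univ * ENNReal.ofReal (Real.log (b / a))) ^ n * ∫⁻ y, F y ^ (n + 1) ∂μ := by
  have hw : ∀ᵐ p ∂shellMeasure μ a b, ENNReal.ofReal p.2 ≠ 0 := by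
    filter_upwards [ae_shellMeasure_mem_Ioc] with p hp
    exact (ENNReal.ofReal_pos.2 (ha.trans hp.1)).ne'
  calc shellIntegral μ F a b x ^ (n + 1)
      ≤ (∫⁻ p, (ENNReal.ofReal p.2)⁻¹ ∂shellMeasure μ a b) ^ n *
          ∫⁻ p, ENNReal.ofReal p.2 ^ n * F (x + p.2 • (p.1 : E)) ^ (n + 1) ∂shellMeasure μ a b :=
        lintegral_pow_succ_le_lintegral_inv_pow_mul (by fun_prop) (by fun_prop) hw
          (.of_forall fun _ ↦ ENNReal.ofReal_ne_top) n
    _ ≤ _ := by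
        rw [lintegral_shellMeasure_inv ha hab]
        gcongr
        exact lintegral_shellMeasure_pow_mul_le hn (hF.pow_const _) ha.le x

lemma measurable_shellIntegral (hF : Measurable F) : Measurable (shellIntegral μ F a b) :=
  Measurable.lintegral_prod_right' (f := fun q : E × sphere (0 : E) 1 × ℝ ↦
    F (q.1 + q.2.2 • (q.2.1 : E))) (by fun_prop)

lemma lintegral_shellIntegral_pow_le (hF : Measurable F) (n : ℕ) :
    ∫⁻ x, shellIntegral μ F a b x ^ (n + 1) ∂μ ≤
      (μ.toSphere univ * ENNReal.ofReal (b - a)) ^ (n + 1) * ∫⁻ x, F x ^ (n + 1) ∂μ := by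
  have hmeas : Measurable fun q : E × sphere (0 : E) 1 × ℝ ↦
      F (q.1 + q.2.2 • (q.2.1 : E)) ^ (n + 1) := by fun_prop
  have hholder (x : E) : shellIntegral μ F a b x ^ (n + 1) ≤ shellMeasure μ a b univ ^ n *
      ∫⁻ p, F (x + p.2 • (p.1 : E)) ^ (n + 1) ∂shellMeasure μ a b := by
    simpa [shellIntegral] using lintegral_pow_succ_le_lintegral_inv_pow_mul
      (ν := shellMeasure μ a b) (f := fun p ↦ F (x + p.2 • (p.1 : E))) (w := 1)
      (by fun_prop) (by fun_prop) (by simp) (by simp) n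
  calc ∫⁻ x, shellIntegral μ F a b x ^ (n + 1) ∂μ
      ≤ ∫⁻ x, shellMeasure μ a b univ ^ n *
          ∫⁻ p, F (x + p.2 • (p.1 : E)) ^ (n + 1) ∂shellMeasure μ a b ∂μ := lintegral_mono hholder
    _ = shellMeasure μ a b univ ^ n *
          ∫⁻ p, ∫⁻ x, F (x + p.2 • (p.1 : E)) ^ (n + 1) ∂μ ∂shellMeasure μ a b := by
        rw [lintegral_const_mul _ hmeas.lintegral_prod_right',
          lintegral_lintegral_swap hmeas.aemeasurable]
    _ = _ := by
        simp_rw [lintegral_add_right_eq_self (μ := μ) fun x ↦ F x ^ (n + 1)]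
        rw [lintegral_const, mul_left_comm, ← pow_succ, mul_comm, shellMeasure_univ]

variable {G : Type*} [NormedAddCommGroup G] [NormedSpace ℝ G] {u : E → G}

lemma shellMeasure_univ_mul_enorm_le (hu : ContDiff ℝ 1 u) (ha : 0 ≤ a) (x : E) :
    shellMeasure μ a b univ * ‖u x‖ₑ ≤
      shellIntegral μ (‖u ·‖ₑ) a b x +
        ENNReal.ofReal (b - a) * shellIntegral μ (‖fderiv ℝ u ·‖ₑ) 0 b x := by
  have hmeas_Du : Measurable fun p : sphere (0 : E) 1 × ℝ ↦
      ‖fderiv ℝ u (x + p.2 • (p.1 : E))‖ₑ :=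
    (hu.continuous_fderiv one_ne_zero).enorm.measurable.comp (by fun_prop)
  have hmeas_u : Measurable fun p : sphere (0 : E) 1 × ℝ ↦ ‖u (x + p.2 • (p.1 : E))‖ₑ :=
    hu.continuous.enorm.measurable.comp (by fun_prop)
  have hray : ∀ᵐ p ∂shellMeasure μ a b, ‖u x‖ₑ ≤ ‖u (x + p.2 • (p.1 : E))‖ₑ +
      ∫⁻ r in Ioc 0 b, ‖fderiv ℝ u (x + r • (p.1 : E))‖ₑ := by
    filter_upwards [ae_shellMeasure_mem_Ioc] with ⟨ω, ρ⟩ ⟨haρ, hρb⟩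
    have hω : ‖(ω : E)‖ₑ = 1 := by rw [← ofReal_norm, norm_eq_of_mem_sphere, ENNReal.ofReal_one]
    calc ‖u x‖ₑ ≤ ‖u (x + ρ • (ω : E))‖ₑ + ‖u (x + ρ • (ω : E)) - u x‖ₑ := by
          simpa using enorm_sub_le (a := u (x + ρ • (ω : E))) (b := u (x + ρ • (ω : E)) - u x)
      _ ≤ ‖u (x + ρ • (ω : E))‖ₑ +
            ∫⁻ r in Ioc 0 ρ, ‖fderiv ℝ u (x + r • (ω : E))‖ₑ * ‖(ω : E)‖ₑ := by
          gcongr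
          exact enorm_sub_le_lintegral_enorm_fderiv hu x ω (ha.trans haρ.le)
      _ ≤ ‖u (x + ρ • (ω : E))‖ₑ + ∫⁻ r in Ioc 0 b, ‖fderiv ℝ u (x + r • (ω : E))‖ₑ := by
          simp only [hω, mul_one]
          gcongr
  have hradial :
      ∫⁻ p, (∫⁻ r in Ioc 0 b, ‖fderiv ℝ u (x + r • (p.1 : E))‖ₑ) ∂shellMeasure μ a b =
        ENNReal.ofReal (b - a) * shellIntegral μ (‖fderiv ℝ u ·‖ₑ) 0 b x := by
    have hmeas_int := hmeas_Du.lintegral_prod_right' (ν := volume.restrict (Ioc 0 b))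
    rw [shellIntegral, lintegral_prod _ (by fun_prop), lintegral_prod _ hmeas_Du.aemeasurable,
      ← lintegral_const_mul _ hmeas_int]
    simp only [lintegral_const, Measure.restrict_apply_univ, Real.volume_Ioc, mul_comm]
  calc shellMeasure μ a b univ * ‖u x‖ₑ = ∫⁻ _, ‖u x‖ₑ ∂shellMeasure μ a b := by
        rw [lintegral_const, mul_comm]
    _ ≤ _ := lintegral_mono_ae hray
    _ = _ := by rw [lintegral_add_left hmeas_u, hradial]; rfl

lemma shellIntegral_le_of_mul_lintegral_le {n : ℕ} (hn : finrank ℝ E = n + 1) (hF : Measurable F)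
    (ha : 0 < a) (hab : a ≤ b) {c : ℝ≥0∞}
    (hc : ENNReal.ofReal (Real.log (b / a)) ^ n * ∫⁻ y, F y ^ (n + 1) ∂μ ≤
      μ.toSphere univ * c ^ (n + 1)) (x : E) :
    shellIntegral μ F a b x ≤ μ.toSphere univ * c := by
  refine (ENNReal.pow_le_pow_left_iff n.succ_ne_zero).1 ?_
  calc shellIntegral μ F a b x ^ (n + 1)
      ≤ (μ.toSphere univ * ENNReal.ofReal (Real.log (b / a))) ^ n * ∫⁻ y, F y ^ (n + 1) ∂μ :=
        shellIntegral_pow_finrank_le hn hF ha hab x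
    _ = μ.toSphere univ ^ n *
          (ENNReal.ofReal (Real.log (b / a)) ^ n * ∫⁻ y, F y ^ (n + 1) ∂μ) := by ring
    _ ≤ μ.toSphere univ ^ n * (μ.toSphere univ * c ^ (n + 1)) := by gcongr
    _ = (μ.toSphere univ * c) ^ (n + 1) := by ring

lemma meas_toSphere_univ_le_shellIntegral_le {n : ℕ} (hn : finrank ℝ E = n + 1)
    (hF : Measurable F) (hF_int : ∫⁻ x, F x ^ (n + 1) ∂μ ≤ 1) :
    μ {x | μ.toSphere univ ≤ shellIntegral μ F a b x} ≤ ENNReal.ofReal (b - a) ^ (n + 1) := by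
  have : Nontrivial E := nontrivial_of_finrank_eq_succ hn
  set S := μ.toSphere univ
  have hS_zero : S ≠ 0 := Measure.measure_univ_ne_zero.2 (Measure.toSphere_ne_zero μ)
  have hS_top : S ≠ ∞ := measure_ne_top _ _
  refine (ENNReal.mul_le_mul_iff_right (pow_ne_zero (n + 1) hS_zero)
    (ENNReal.pow_ne_top hS_top)).1 ?_
  calc S ^ (n + 1) * μ {x | S ≤ shellIntegral μ F a b x}
      ≤ S ^ (n + 1) * μ {x | S ^ (n + 1) ≤ shellIntegral μ F a b x ^ (n + 1)} := by
        simp only [ENNReal.pow_le_pow_left_iff n.succ_ne_zero, le_refl]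
    _ ≤ ∫⁻ x, shellIntegral μ F a b x ^ (n + 1) ∂μ :=
        mul_meas_ge_le_lintegral ((measurable_shellIntegral hF).pow_const _) _
    _ ≤ (S * ENNReal.ofReal (b - a)) ^ (n + 1) * ∫⁻ x, F x ^ (n + 1) ∂μ :=
        lintegral_shellIntegral_pow_le hF n
    _ ≤ (S * ENNReal.ofReal (b - a)) ^ (n + 1) * 1 := by gcongr
    _ = S ^ (n + 1) * ENNReal.ofReal (b - a) ^ (n + 1) := by rw [mul_one, mul_pow]

lemma toSphere_univ_le_shellIntegral_of_lt_enorm (hu : ContDiff ℝ 1 u) {x : E} {B δ : ℝ≥0∞} {s : ℝ}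
    (hmean : shellIntegral μ (‖u ·‖ₑ) 1 2 x ≤ μ.toSphere univ * B)
    (hfar : shellIntegral μ (‖fderiv ℝ u ·‖ₑ) s 2 x ≤ μ.toSphere univ * δ)
    (hx : 1 + B + δ < ‖u x‖ₑ) :
    μ.toSphere univ ≤ shellIntegral μ (‖fderiv ℝ u ·‖ₑ) 0 s x := by
  set S := μ.toSphere univ
  have hwidth : ENNReal.ofReal (2 - 1) = 1 := by norm_num
  have hBδ : S * (B + δ) ≠ ∞ :=
    ENNReal.mul_ne_top (measure_ne_top _ _) fun h ↦ by simp [add_assoc, h] at hx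
  refine ENNReal.le_of_add_le_add_right hBδ ?_
  calc S + S * (B + δ) = S * (1 + B + δ) := by ring
    _ ≤ S * ‖u x‖ₑ := by gcongr
    _ ≤ shellIntegral μ (‖u ·‖ₑ) 1 2 x + shellIntegral μ (‖fderiv ℝ u ·‖ₑ) 0 2 x := by
        simpa only [shellMeasure_univ, hwidth, mul_one, one_mul] using
          shellMeasure_univ_mul_enorm_le (b := 2) hu zero_le_one x
    _ ≤ S * B + (shellIntegral μ (‖fderiv ℝ u ·‖ₑ) 0 s x + S * δ) := by
        gcongr
        exact (shellIntegral_le_add s x).trans (by gcongr)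
    _ = shellIntegral μ (‖fderiv ℝ u ·‖ₑ) 0 s x + S * (B + δ) := by ring

lemma meas_lt_enorm_le_exp {n : ℕ} (hn : finrank ℝ E = n + 1)
    (hu : ContDiff ℝ 1 u) (hgrad : ∫⁻ x, ‖fderiv ℝ u x‖ₑ ^ (n + 1) ∂μ ≤ 1) {B δ : ℝ≥0∞}
    (hB : ENNReal.ofReal (Real.log 2) ^ n * ∫⁻ x, ‖u x‖ₑ ^ (n + 1) ∂μ ≤
      μ.toSphere univ * B ^ (n + 1))
    {L : ℝ} (hL : 0 ≤ L) (hδ : ENNReal.ofReal L ^ n ≤ μ.toSphere univ * δ ^ (n + 1)) :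
    μ {x | 1 + B + δ < ‖u x‖ₑ} ≤ ENNReal.ofReal (2 * Real.exp (-L)) ^ (n + 1) := by
  -- The radius at which the far potential, controlled by `log (2 / s)`, is still at most `S * δ`.
  set s := 2 * Real.exp (-L)
  have hs_le : s ≤ 2 := by simp [s, hL]
  have hlog : Real.log (2 / s) = L := by simp [s, Real.exp_neg, div_mul_eq_div_div]
  have hmeas_Du : Measurable (‖fderiv ℝ u ·‖ₑ) :=
    (hu.continuous_fderiv one_ne_zero).enorm.measurable
  have hmean (x : E) : shellIntegral μ (‖u ·‖ₑ) 1 2 x ≤ μ.toSphere univ * B :=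
    shellIntegral_le_of_mul_lintegral_le hn hu.continuous.enorm.measurable one_pos one_le_two
      (by rwa [div_one]) x
  have hfar (x : E) : shellIntegral μ (‖fderiv ℝ u ·‖ₑ) s 2 x ≤ μ.toSphere univ * δ :=
    shellIntegral_le_of_mul_lintegral_le hn hmeas_Du (by positivity) hs_le
      (by rw [hlog]; exact (mul_le_of_le_one_right' hgrad).trans hδ) x
  calc μ {x | 1 + B + δ < ‖u x‖ₑ}
      ≤ μ {x | μ.toSphere univ ≤ shellIntegral μ (‖fderiv ℝ u ·‖ₑ) 0 s x} :=
        measure_mono fun x hx ↦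
          toSphere_univ_le_shellIntegral_of_lt_enorm hu (hmean x) (hfar x) hx
    _ ≤ ENNReal.ofReal (s - 0) ^ (n + 1) := meas_toSphere_univ_le_shellIntegral_le hn hmeas_Du hgrad
    _ = ENNReal.ofReal s ^ (n + 1) := by rw [sub_zero]

lemma meas_lt_norm_le_gaussian (hE : finrank ℝ E = 2) (hu : ContDiff ℝ 1 u)
    (hgrad : ∫⁻ x, ‖fderiv ℝ u x‖ₑ ^ 2 ∂μ ≤ 1) {c : ℝ} (hc : 0 ≤ c)
    (hu_sq : ENNReal.ofReal (Real.log 2) * ∫⁻ x, ‖u x‖ₑ ^ 2 ∂μ ≤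
      μ.toSphere univ * ENNReal.ofReal c ^ 2) {t : ℝ} (ht : 1 + c ≤ t) :
    μ {x | t < ‖u x‖} ≤
      ENNReal.ofReal (4 * Real.exp (-(4 * μ.real (ball 0 1) * (t - (1 + c)) ^ 2))) := by
  set κ := μ.real (ball 0 1)
  set d := t - (1 + c)
  have hd : 0 ≤ d := sub_nonneg.2 ht
  have hS : μ.toSphere univ = ENNReal.ofReal (2 * κ) := by
    rw [← ofReal_measureReal, Measure.toSphere_real_apply_univ, hE, Nat.cast_ofNat]
  have htail := meas_lt_enorm_le_exp (n := 1) hE hu hgrad (B := ENNReal.ofReal c)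
    (δ := ENNReal.ofReal d) (by rwa [pow_one]) (L := 2 * κ * d ^ 2) (by positivity)
    (by rw [hS, pow_one, ENNReal.ofReal_mul (by positivity), ENNReal.ofReal_pow hd])
  have hlevel : 1 + ENNReal.ofReal c + ENNReal.ofReal d = ENNReal.ofReal t := by
    rw [← ENNReal.ofReal_one, ← ENNReal.ofReal_add zero_le_one hc,
      ← ENNReal.ofReal_add (by positivity) hd, add_sub_cancel]
  calc μ {x | t < ‖u x‖} ≤ μ {x | 1 + ENNReal.ofReal c + ENNReal.ofReal d < ‖u x‖ₑ} := by
        refine measure_mono fun x (hx : t < ‖u x‖) ↦ show _ < ‖u x‖ₑ from ?_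
        rw [hlevel, ← ofReal_norm]
        exact (ENNReal.ofReal_lt_ofReal_iff_of_nonneg (by linarith)).2 hx
    _ ≤ ENNReal.ofReal (2 * Real.exp (-(2 * κ * d ^ 2))) ^ 2 := htail
    _ = ENNReal.ofReal (4 * Real.exp (-(4 * κ * d ^ 2))) := by
        rw [← ENNReal.ofReal_pow (by positivity), mul_pow, ← Real.exp_nat_mul]
        congr 2
        · norm_num
        · congr 1; push_cast; ring

lemma exists_forall_meas_lt_norm_le_gaussian (hE : finrank ℝ E = 2) (μ : Measure E)
    [μ.IsAddHaarMeasure] (M : ℝ≥0) :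
    ∃ T : ℝ, ∀ u : E → G, ContDiff ℝ 1 u → ∫⁻ x, ‖fderiv ℝ u x‖ₑ ^ 2 ∂μ ≤ 1 →
      ∫⁻ x, ‖u x‖ₑ ^ 2 ∂μ ≤ M → ∀ t ≥ T,
        μ {x | t < ‖u x‖} ≤
          ENNReal.ofReal (4 * Real.exp (-(4 * μ.real (ball 0 1) * (t - T) ^ 2))) := by
  have : Nontrivial E := nontrivial_of_finrank_eq_succ hE
  have hS : μ.toSphere univ ≠ 0 := Measure.measure_univ_ne_zero.2 (Measure.toSphere_ne_zero μ)
  set A : ℝ≥0∞ := ENNReal.ofReal (Real.log 2) * M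
  have hA : A / μ.toSphere univ ≠ ∞ :=
    ENNReal.div_ne_top (ENNReal.mul_ne_top ENNReal.ofReal_ne_top ENNReal.coe_ne_top) hS
  refine ⟨1 + √(A / μ.toSphere univ).toReal, fun u hu hgrad hu_sq t ht ↦
    meas_lt_norm_le_gaussian hE hu hgrad (Real.sqrt_nonneg _) ?_ ht⟩
  rw [← ENNReal.ofReal_pow (Real.sqrt_nonneg _), Real.sq_sqrt ENNReal.toReal_nonneg,
    ENNReal.ofReal_toReal hA, ENNReal.mul_div_cancel hS (measure_ne_top _ _)]
  exact mul_le_mul' le_rfl hu_sq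

end Polar

section Gaussian

lemma integrable_mul_exp_sq_mul_exp_neg_sq {α β : ℝ} (hαβ : α < β) (T : ℝ) :
    Integrable fun t : ℝ ↦ t * Real.exp (α * t ^ 2) * Real.exp (-(β * (t - T) ^ 2)) := by
  have hγ : 0 < β - α := sub_pos.2 hαβ
  -- Completing the square: the exponent has its maximum `α * T * t₀` at `t₀`.
  set t₀ := β * T / (β - α)
  have hcentred : Integrable fun s : ℝ ↦ (s + t₀) * Real.exp (-(β - α) * s ^ 2) := by
    simp only [add_mul]
    exact (integrable_mul_exp_neg_mul_sq hγ).add ((integrable_exp_neg_mul_sq hγ).const_mul t₀)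
  refine ((hcentred.comp_sub_right t₀).const_mul (Real.exp (α * T * t₀))).congr
    (.of_forall fun t ↦ ?_)
  have hsquare : α * T * t₀ + -(β - α) * (t - t₀) ^ 2 = α * t ^ 2 + -(β * (t - T) ^ 2) := by
    simp only [t₀]
    field_simp
    ring
  simp only [sub_add_cancel]
  rw [mul_left_comm, ← Real.exp_add, hsquare, Real.exp_add, mul_assoc]

end Gaussian

section LayerCake

variable {X : Type*} [MeasurableSpace X] {ν : Measure X} {f : X → ℝ}

lemma lintegral_exp_mul_sq_sub_one_eq_lintegral_meas_lt_mul (hf : AEMeasurable f ν)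
    (hf_nonneg : 0 ≤ᵐ[ν] f) {α : ℝ} (hα : 0 ≤ α) :
    ∫⁻ x, .ofReal (Real.exp (α * f x ^ 2) - 1) ∂ν =
      ∫⁻ t in Ioi 0, ν {x | t < f x} * .ofReal (2 * t * (α * Real.exp (α * t ^ 2))) := by
  have hprimitive (y : ℝ) :
      ∫ t in (0 : ℝ)..y, 2 * t * (α * Real.exp (α * t ^ 2)) = Real.exp (α * y ^ 2) - 1 := by
    rw [intervalIntegral.integral_eq_sub_of_hasDerivAt (f := fun t ↦ Real.exp (α * t ^ 2))
      (fun t _ ↦ ?_) (Continuous.intervalIntegrable (by fun_prop) _ _)]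
    · simp
    · refine ((hasDerivAt_pow 2 t).const_mul α).exp.congr_deriv ?_
      push_cast
      ring
  rw [← lintegral_comp_eq_lintegral_meas_lt_mul ν hf_nonneg hf
    (fun t _ ↦ Continuous.intervalIntegrable (by fun_prop) _ _)]
  · simp only [hprimitive]
  · filter_upwards [ae_restrict_mem measurableSet_Ioi] with t ht
    have : 0 ≤ t := le_of_lt ht
    positivity

lemma lintegral_exp_mul_sq_sub_one_le (hf : AEMeasurable f ν) (hf_nonneg : 0 ≤ᵐ[ν] f) {α : ℝ}
    (hα : 0 ≤ α) (T : ℝ) :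
    ∫⁻ x, .ofReal (Real.exp (α * f x ^ 2) - 1) ∂ν ≤
      .ofReal (α * Real.exp (α * T ^ 2)) * ∫⁻ x, .ofReal (f x ^ 2) ∂ν +
        ∫⁻ t in Ioi T, ν {x | t < f x} * .ofReal (2 * t * (α * Real.exp (α * t ^ 2))) := by
  have hbody : ∫⁻ t in Ioc 0 T, ν {x | t < f x} * .ofReal (2 * t * (α * Real.exp (α * t ^ 2))) ≤
      .ofReal (α * Real.exp (α * T ^ 2)) * ∫⁻ x, .ofReal (f x ^ 2) ∂ν := by
    have hsq : ∫⁻ x, .ofReal (f x ^ 2) ∂ν =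
        .ofReal 2 * ∫⁻ t in Ioi 0, ν {x | t < f x} * .ofReal t := by
      simpa [show (2 : ℝ) - 1 = 1 by norm_num] using
        lintegral_rpow_eq_lintegral_meas_lt_mul ν hf_nonneg hf two_pos
    rw [hsq, ← mul_assoc, ← lintegral_const_mul' _ _ (by finiteness)]
    refine (setLIntegral_mono' measurableSet_Ioc fun t ht ↦ ?_).trans
      (lintegral_mono_set Ioc_subset_Ioi_self)
    have htT : t ^ 2 ≤ T ^ 2 := pow_le_pow_left₀ ht.1.le ht.2 2
    calc ν {x | t < f x} * .ofReal (2 * t * (α * Real.exp (α * t ^ 2)))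
        ≤ ν {x | t < f x} * .ofReal (2 * t * (α * Real.exp (α * T ^ 2))) := by
          have : 0 ≤ t := ht.1.le
          gcongr
      _ = .ofReal (α * Real.exp (α * T ^ 2)) * .ofReal 2 * (ν {x | t < f x} * .ofReal t) := by
          rw [ENNReal.ofReal_mul (mul_nonneg zero_le_two ht.1.le), ENNReal.ofReal_mul zero_le_two]
          ring
  rw [lintegral_exp_mul_sq_sub_one_eq_lintegral_meas_lt_mul hf hf_nonneg hα]
  exact (lintegral_mono_set Ioi_subset_Ioc_union_Ioi).trans
    ((lintegral_union_le _ _ _).trans (by gcongr))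

lemma exists_forall_lintegral_exp_mul_sq_sub_one_le {α β : ℝ} (hα : 0 ≤ α) (hαβ : α < β) {C : ℝ}
    (hC : 0 ≤ C) (T : ℝ) (M : ℝ≥0) :
    ∃ K : ℝ, 0 < K ∧ ∀ (ν : Measure X) (f : X → ℝ), AEMeasurable f ν → 0 ≤ᵐ[ν] f →
      ∫⁻ x, ENNReal.ofReal (f x ^ 2) ∂ν ≤ M →
      (∀ t > T, ν {x | t < f x} ≤ ENNReal.ofReal (C * Real.exp (-(β * (t - T) ^ 2)))) →
      ∫⁻ x, ENNReal.ofReal (Real.exp (α * f x ^ 2) - 1) ∂ν ≤ ENNReal.ofReal K := by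
  set tail : ℝ → ℝ := fun t ↦ C * Real.exp (-(β * (t - T) ^ 2))
  set weight : ℝ → ℝ := fun t ↦ 2 * t * (α * Real.exp (α * t ^ 2))
  set A : ℝ≥0∞ :=
    .ofReal (α * Real.exp (α * T ^ 2)) * M + ∫⁻ t in Ioi T, .ofReal (tail t * weight t)
  have hA : A ≠ ∞ := by
    have hint : Integrable fun t ↦ tail t * weight t :=
      ((integrable_mul_exp_sq_mul_exp_neg_sq hαβ T).const_mul (2 * C * α)).congr
        (.of_forall fun t ↦ by simp only [tail, weight]; ring)
    exact ENNReal.add_ne_top.2 ⟨ENNReal.mul_ne_top ENNReal.ofReal_ne_top ENNReal.coe_ne_top,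
      hint.integrableOn.lintegral_lt_top.ne⟩
  refine ⟨A.toReal + 1, by positivity, fun ν f hf hf_nonneg hf_sq htail ↦ ?_⟩
  calc ∫⁻ x, ENNReal.ofReal (Real.exp (α * f x ^ 2) - 1) ∂ν
      ≤ .ofReal (α * Real.exp (α * T ^ 2)) * ∫⁻ x, .ofReal (f x ^ 2) ∂ν +
          ∫⁻ t in Ioi T, ν {x | t < f x} * .ofReal (weight t) :=
        lintegral_exp_mul_sq_sub_one_le hf hf_nonneg hα T
    _ ≤ A := by
        refine add_le_add (mul_le_mul' le_rfl hf_sq)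
          (setLIntegral_mono' measurableSet_Ioi fun t ht ↦ ?_)
        rw [ENNReal.ofReal_mul (p := tail t) (mul_nonneg hC (Real.exp_nonneg _))]
        exact mul_le_mul' (htail t ht) le_rfl
    _ = ENNReal.ofReal A.toReal := (ENNReal.ofReal_toReal hA).symm
    _ ≤ ENNReal.ofReal (A.toReal + 1) :=
        ENNReal.ofReal_le_ofReal (le_add_of_nonneg_right zero_le_one)

end LayerCake

lemma ofReal_norm_sq {G : Type*} [NormedAddCommGroup G] (a : G) :
    ENNReal.ofReal (‖a‖ ^ 2) = ‖a‖ₑ ^ 2 := by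
  rw [ENNReal.ofReal_pow (norm_nonneg a), ofReal_norm]

lemma norm_gradient {E : Type*} [NormedAddCommGroup E] [InnerProductSpace ℝ E] [CompleteSpace E]
    (u : E → ℝ) (x : E) : ‖gradient u x‖ = ‖fderiv ℝ u x‖ :=
  (InnerProductSpace.toDual ℝ E).symm.norm_map _

theorem stmt_16_general {E G : Type*} [NormedAddCommGroup E] [NormedSpace ℝ E]
    [MeasurableSpace E] [BorelSpace E] [FiniteDimensional ℝ E] [NormedAddCommGroup G]
    [NormedSpace ℝ G] (hE : finrank ℝ E = 2) (μ : Measure E) [μ.IsAddHaarMeasure] (M : ℝ≥0)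
    {α : ℝ} (hα0 : 0 ≤ α) (hα : α < 4 * μ.real (ball 0 1)) :
    ∃ K : ℝ, 0 < K ∧ ∀ u : E → G, ContDiff ℝ 1 u →
      ∫⁻ x, ‖fderiv ℝ u x‖ₑ ^ 2 ∂μ ≤ 1 → ∫⁻ x, ‖u x‖ₑ ^ 2 ∂μ ≤ M →
      ∫⁻ x, ENNReal.ofReal (Real.exp (α * ‖u x‖ ^ 2) - 1) ∂μ ≤ ENNReal.ofReal K := by
  obtain ⟨T, htail⟩ := exists_forall_meas_lt_norm_le_gaussian (G := G) hE μ M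
  obtain ⟨K, hK, hbound⟩ :=
    exists_forall_lintegral_exp_mul_sq_sub_one_le (X := E) hα0 hα zero_le_four T M
  refine ⟨K, hK, fun u hu hgrad hu_sq ↦ ?_⟩
  exact hbound μ _ hu.continuous.norm.aemeasurable (.of_forall fun x ↦ norm_nonneg (u x))
    (by simpa only [ofReal_norm_sq] using hu_sq) fun t ht ↦ htail u hu hgrad hu_sq t ht.le

theorem stmt_16 (M α : ℝ) (hM : 0 < M) (hα0 : 0 < α) (hα : α < 4 * Real.pi) :
    ∃ K : ℝ, 0 < K ∧
      ∀ u : EuclideanSpace ℝ (Fin 2) → ℝ, ContDiff ℝ 1 u → HasCompactSupport u →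
        (∫⁻ x, ENNReal.ofReal (‖gradient u x‖ ^ 2)) ≤ 1 →
        (∫⁻ x, ENNReal.ofReal ((u x) ^ 2)) ≤ ENNReal.ofReal M →
        ∫⁻ x, ENNReal.ofReal (Real.exp (α * (u x) ^ 2) - 1) ≤ ENNReal.ofReal K := by
  have hball : volume.real (ball (0 : EuclideanSpace ℝ (Fin 2)) 1) = Real.pi := by
    simp [measureReal_def, Real.pi_nonneg]
  obtain ⟨K, hK, hbound⟩ := stmt_16_general (G := ℝ) (by simp) volume M.toNNReal hα0.le (hball ▸ hα)
  refine ⟨K, hK, fun u hu _ hgrad hu_sq ↦ ?_⟩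
  simpa using hbound u hu (by simpa [norm_gradient, ofReal_norm_sq] using hgrad)
    (by simpa [← ofReal_norm_sq, ENNReal.ofNNReal_toNNReal] using hu_sq)
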